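/- arXiv:1410.7727 — 2 statements merged into one kernel-verified Lean document; each statement's English description precedes it below -/
import Mathlib

section
/- Let Z be a compact metric space, g : Z → Z a continuous map, and φ : Z → ℝ^k a continuous function. Let R(g) denote the set of recurrent points of g, i.e. points z ∈ Z with g^{r_i}(z) → z for some sequence r_i → ∞. Then the convex hull of {φ̂(z) : z ∈ R(g), φ̂(z) exists} equals the convex hull of rot_MZ(Z,g,φ). Moreover, if W is a g-invariant subset of Z containing R(g) such that the set {φ̂(z) : z ∈ W, φ̂(z) exists} is convex, then {φ̂(z) : z ∈ W, φ̂(z) exists} = rot_MZ(Z,g,φ). -/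
open Filter Topology MeasureTheory

noncomputable def cocycle {Z : Type*} {k : ℕ} (g : Z → Z) (φ : Z → Fin k → ℝ) (z : Z) (r : ℕ) :
    Fin k → ℝ := ∑ i ∈ Finset.range r, φ (g^[i] z)

/-- The Birkhoff average of `φ` along the `g`-orbit of `z` exists and equals `v`. -/
def hasAvg {Z : Type*} {k : ℕ} (g : Z → Z) (φ : Z → Fin k → ℝ) (z : Z) (v : Fin k → ℝ) : Prop :=
  Tendsto (fun r : ℕ => (r : ℝ)⁻¹ • cocycle g φ z r) atTop (nhds v)

/-- The pointwise rotation set. -/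
def rotP {Z : Type*} {k : ℕ} (g : Z → Z) (φ : Z → Fin k → ℝ) : Set (Fin k → ℝ) :=
  {v | ∃ z, hasAvg g φ z v}

/-- The pointwise rotation set of points in a subset `W`. -/
def rotPOn {Z : Type*} {k : ℕ} (g : Z → Z) (φ : Z → Fin k → ℝ) (W : Set Z) : Set (Fin k → ℝ) :=
  {v | ∃ z ∈ W, hasAvg g φ z v}

/-- The Misiurewicz–Ziemian rotation set. -/
def rotMZ {Z : Type*} {k : ℕ} (g : Z → Z) (φ : Z → Fin k → ℝ) : Set (Fin k → ℝ) :=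
  {v | ∃ (z : ℕ → Z) (r : ℕ → ℕ), Tendsto r atTop atTop ∧
    Tendsto (fun i => (r i : ℝ)⁻¹ • cocycle g φ (z i) (r i)) atTop (nhds v)}

/-- The measure rotation set. -/
def rotM {Z : Type*} [MeasurableSpace Z] {k : ℕ} (g : Z → Z) (φ : Z → Fin k → ℝ) :
    Set (Fin k → ℝ) :=
  {v | ∃ μ : Measure Z, IsProbabilityMeasure μ ∧ MeasurePreserving g μ μ ∧ (∫ z, φ z ∂μ) = v}

/-- The set of recurrent points of `g`. -/
def RecSet {Z : Type*} [TopologicalSpace Z] (g : Z → Z) : Set Z :=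
  {z | ∃ r : ℕ → ℕ, Tendsto r atTop atTop ∧ Tendsto (fun i => g^[r i] z) atTop (nhds z)}

/-! Let `v` be a limit of `φ_g(zᵢ, rᵢ) / rᵢ`. The uniform distributions on the orbit segments of
length `rᵢ` from `zᵢ` accumulate at a `g`-invariant probability measure `μ` with `∫ φ dμ = v`.
For `μ`-almost every `z`, the average `φ̂(z)` exists by the pointwise ergodic theorem and `z` is
recurrent by Poincaré's theorem; moreover `∫ φ̂ dμ = ∫ φ dμ = v`. So `v` is the barycenter of a
distribution on the pointwise rotation set of the recurrent points, and in finite dimension such a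
barycenter lies in the convex hull itself, not merely in its closure. -/

section Convex

variable {E : Type*} [NormedAddCommGroup E] [NormedSpace ℝ E] [FiniteDimensional ℝ E]

theorem exists_dual_ne_zero_eqOn_const_of_affineSpan_ne_top {C : Set E} (hne : C.Nonempty)
    (hC : affineSpan ℝ C ≠ ⊤) :
    ∃ l : StrongDual ℝ E, l ≠ 0 ∧ ∃ a : ℝ, ∀ y ∈ C, l y = a := by
  obtain ⟨c, hc⟩ := hne
  have hdir : (affineSpan ℝ C).direction < ⊤ := lt_top_iff_ne_top.2 fun h ↦
    hC ((AffineSubspace.direction_eq_top_iff_of_nonempty ⟨c, subset_affineSpan ℝ C hc⟩).1 h)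
  obtain ⟨l, hl, hker⟩ := Submodule.exists_le_ker_of_lt_top _ hdir
  refine ⟨LinearMap.toContinuousLinearMap l, by simpa using hl, l c, fun y hy ↦ ?_⟩
  have hyc : y -ᵥ c ∈ (affineSpan ℝ C).direction := AffineSubspace.vsub_mem_direction
    (subset_affineSpan ℝ C hy) (subset_affineSpan ℝ C hc)
  simpa [sub_eq_zero] using hker hyc

theorem exists_dual_ne_zero_forall_le_of_notMem {C : Set E} (hC : Convex ℝ C) (hne : C.Nonempty)
    {x : E} (hx : x ∉ C) : ∃ l : StrongDual ℝ E, l ≠ 0 ∧ ∀ y ∈ C, l y ≤ l x := by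
  by_cases hint : (interior C).Nonempty
  · exact geometric_hahn_banach_of_nonempty_interior_point hC
      (fun h ↦ hx (interior_subset h)) hint
  · rw [hC.interior_nonempty_iff_affineSpan_eq_top] at hint
    obtain ⟨l, hl, a, hla⟩ := exists_dual_ne_zero_eqOn_const_of_affineSpan_ne_top hne hint
    rcases le_total a (l x) with hax | hxa
    · exact ⟨l, hl, fun y hy ↦ (hla y hy).trans_le hax⟩
    · exact ⟨-l, neg_ne_zero.2 hl, fun y hy ↦ by simpa [hla y hy] using hxa⟩

/-- `C` need not be closed, unlike in `Convex.integral_mem`: if the barycenter `b` were outside `C`,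
a functional separating `b` from `C` would be a.e. constant along `f`, so `f - b` would take values
in its kernel, and one inducts on the dimension. -/
theorem integral_mem_of_convex_of_finiteDimensional {Ω : Type*} [MeasurableSpace Ω]
    {μ : Measure Ω} [IsProbabilityMeasure μ] {f : Ω → E} {C : Set E} (hC : Convex ℝ C)
    (hf : Integrable f μ) (hfC : ∀ᵐ x ∂μ, f x ∈ C) : ∫ x, f x ∂μ ∈ C := by
  induction hn : Module.finrank ℝ E using Nat.strong_induction_on generalizing E with
  | _ n ih =>
  subst hn
  set b := ∫ x, f x ∂μ with hb
  by_contra hbC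
  obtain ⟨ω, hω⟩ := hfC.exists
  obtain ⟨l, hl, hlC⟩ := exists_dual_ne_zero_forall_le_of_notMem hC ⟨f ω, hω⟩ hbC
  have hlf : ∀ᵐ x ∂μ, l (f x) = l b := by
    refine (integral_eq_iff_of_ae_le (l.integrable_comp hf) (integrable_const _)
      (hfC.mono fun x hx ↦ hlC _ hx)).1 ?_
    rw [l.integral_comp_comm hf, integral_const, probReal_univ, one_smul]
  obtain ⟨Q, hQ⟩ := l.ker_closedComplemented_of_finiteDimensional_range
  have hker : Module.finrank ℝ l.ker < Module.finrank ℝ E :=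
    Submodule.finrank_lt fun h ↦ hl (ContinuousLinearMap.coe_injective (LinearMap.ker_eq_top.1 h))
  have hfb : Integrable (fun x ↦ f x - b) μ := hf.sub (integrable_const b)
  have hQf : ∀ᵐ x ∂μ, ((Q (f x - b) : l.ker) : E) + b ∈ C := by
    filter_upwards [hlf, hfC] with x hx hxC
    rw [hQ ⟨f x - b, by simp [hx]⟩]
    simpa using hxC
  have hmem := ih _ hker ((hC.translate_preimage_left b).linear_preimage l.ker.subtype)
    (Q.integrable_comp hfb) hQf rfl
  have hzero : ∫ x, Q (f x - b) ∂μ = 0 := by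
    rw [Q.integral_comp_comm hfb, integral_sub hf (integrable_const b)]
    simp [hb]
  rw [Set.mem_preimage, hzero] at hmem
  exact hbC (by simpa using hmem)

end Convex

theorem integral_comp_of_measurePreserving {α β E : Type*} [MeasurableSpace α] [MeasurableSpace β]
    [NormedAddCommGroup E] [NormedSpace ℝ E] {μ : Measure α} {ν : Measure β} {S : α → β}
    (hS : MeasurePreserving S μ ν) {f : β → E} (hf : AEStronglyMeasurable f ν) :
    ∫ x, f (S x) ∂μ = ∫ y, f y ∂ν := by
  rw [← hS.map_eq] at hf ⊢
  exact (integral_map hS.aemeasurable hf).symm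

theorem identDistrib_comp_of_measurePreserving {α β γ : Type*} [MeasurableSpace α]
    [MeasurableSpace β] [MeasurableSpace γ] {μ : Measure α} {ν : Measure β} {S : α → β}
    (hS : MeasurePreserving S μ ν) {f : β → γ} (hf : AEMeasurable f ν) :
    ProbabilityTheory.IdentDistrib (f ∘ S) f μ ν := by
  refine ⟨hf.comp_quasiMeasurePreserving hS.quasiMeasurePreserving, hf, ?_⟩
  rw [← hS.map_eq] at hf ⊢
  exact (hf.map_map_of_aemeasurable hS.aemeasurable).symm

section MaximalInequality

variable {Ω : Type*} {T : Ω → Ω} {f : Ω → ℝ}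

/-- The maximal function `max (S₀ f x, …, Sₙ f x)` of the Birkhoff sums of `f`. It is nonnegative,
since the empty sum `S₀ f x = 0` is included. -/
noncomputable def birkhoffMax (T : Ω → Ω) (f : Ω → ℝ) (n : ℕ) (x : Ω) : ℝ :=
  partialSups (fun k ↦ birkhoffSum T f k x) n

theorem birkhoffSum_le_birkhoffMax {k n : ℕ} (h : k ≤ n) (x : Ω) :
    birkhoffSum T f k x ≤ birkhoffMax T f n x :=
  le_partialSups_of_le (fun k ↦ birkhoffSum T f k x) h

theorem birkhoffMax_nonneg (n : ℕ) (x : Ω) : 0 ≤ birkhoffMax T f n x :=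
  (birkhoffSum_zero T f x).symm.trans_le (birkhoffSum_le_birkhoffMax n.zero_le x)

theorem monotone_birkhoffMax (x : Ω) : Monotone fun n ↦ birkhoffMax T f n x :=
  (partialSups fun k ↦ birkhoffSum T f k x).monotone

theorem birkhoffMax_zero (x : Ω) : birkhoffMax T f 0 x = 0 := by
  simp [birkhoffMax]

theorem birkhoffMax_succ (n : ℕ) (x : Ω) :
    birkhoffMax T f (n + 1) x = max 0 (f x + birkhoffMax T f n (T x)) := by
  simp only [birkhoffMax, partialSups_add_one', Function.comp_def, birkhoffSum_succ',
    partialSups_const_add]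
  simp

theorem birkhoffMax_pos_iff (n : ℕ) (x : Ω) :
    0 < birkhoffMax T f n x ↔ ∃ k ≤ n, 0 < birkhoffSum T f k x := by
  simp [birkhoffMax, partialSups_apply]

theorem birkhoffMax_sub_birkhoffMax_apply_le (n : ℕ) (x : Ω) :
    birkhoffMax T f n x - birkhoffMax T f n (T x) ≤
      {y | 0 < birkhoffMax T f n y}.indicator f x := by
  by_cases hx : 0 < birkhoffMax T f n x
  · rw [Set.indicator_of_mem (by exact hx)]
    cases n with
    | zero => exact absurd hx (by simp [birkhoffMax_zero])
    | succ n =>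
      have hrec := birkhoffMax_succ (T := T) (f := f) n x
      have hmono := monotone_birkhoffMax (T := T) (f := f) (T x) n.le_succ
      grind
  · rw [Set.indicator_of_notMem (by exact hx)]
    linarith [birkhoffMax_nonneg (T := T) (f := f) n (T x)]

variable [MeasurableSpace Ω] {μ : Measure Ω}

theorem integrable_birkhoffMax (hT : MeasurePreserving T μ μ) (hf : Integrable f μ) (n : ℕ) :
    Integrable (birkhoffMax T f n) μ := by
  induction n with
  | zero => simp [funext birkhoffMax_zero]
  | succ n ih =>
    rw [funext (birkhoffMax_succ n)]
    exact (integrable_zero _ _ _).sup (hf.add (hT.integrable_comp_of_integrable ih))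

theorem setIntegral_birkhoffMax_pos_nonneg (hT : MeasurePreserving T μ μ) (hf : Integrable f μ)
    (n : ℕ) : 0 ≤ ∫ x in {x | 0 < birkhoffMax T f n x}, f x ∂μ := by
  have hM := integrable_birkhoffMax hT hf n
  have hMT : Integrable (fun x ↦ birkhoffMax T f n (T x)) μ := hT.integrable_comp_of_integrable hM
  have hpos : NullMeasurableSet {x | 0 < birkhoffMax T f n x} μ :=
    nullMeasurableSet_lt aemeasurable_const hM.aemeasurable
  calc 0 = ∫ x, (birkhoffMax T f n x - birkhoffMax T f n (T x)) ∂μ := by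
        rw [integral_sub hM hMT, integral_comp_of_measurePreserving hT hM.aestronglyMeasurable,
          sub_self]
    _ ≤ ∫ x, {x | 0 < birkhoffMax T f n x}.indicator f x ∂μ :=
        integral_mono (hM.sub hMT) (hf.indicator₀ hpos)
          (birkhoffMax_sub_birkhoffMax_apply_le n)
    _ = ∫ x in {x | 0 < birkhoffMax T f n x}, f x ∂μ := integral_indicator₀ hpos

theorem setIntegral_exists_birkhoffSum_pos_nonneg (hT : MeasurePreserving T μ μ)
    (hf : Integrable f μ) : 0 ≤ ∫ x in {x | ∃ n, 0 < birkhoffSum T f n x}, f x ∂μ := by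
  have hunion : {x | ∃ n, 0 < birkhoffSum T f n x} = ⋃ n, {x | 0 < birkhoffMax T f n x} := by
    ext x
    simp only [Set.mem_iUnion, Set.mem_ofPred_eq, birkhoffMax_pos_iff]
    exact ⟨fun ⟨n, hn⟩ ↦ ⟨n, n, le_rfl, hn⟩, fun ⟨_, k, _, hk⟩ ↦ ⟨k, hk⟩⟩
  rw [hunion]
  refine ge_of_tendsto' (tendsto_setIntegral_of_monotone₀ (fun n ↦ ?_) (fun m n hmn x hx ↦ ?_)
    hf.integrableOn) (setIntegral_birkhoffMax_pos_nonneg hT hf)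
  · exact nullMeasurableSet_lt aemeasurable_const (integrable_birkhoffMax hT hf n).aemeasurable
  · exact lt_of_lt_of_le hx (monotone_birkhoffMax x hmn)

end MaximalInequality

section PointwiseErgodicTheorem

variable {Ω : Type*} {T : Ω → Ω} {f : Ω → ℝ}

theorem lt_birkhoffAverage_iff {n : ℕ} (hn : 0 < n) (c : ℝ) (x : Ω) :
    c < birkhoffAverage ℝ T f n x ↔ n * c < birkhoffSum T f n x := by
  rw [birkhoffAverage, smul_eq_mul, lt_inv_mul_iff₀ (Nat.cast_pos.2 hn)]

theorem eventually_lt_natCast_mul {a : ℝ} (ha : 0 < a) (b : ℝ) :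
    ∀ᶠ n : ℕ in atTop, b < n * a :=
  (tendsto_natCast_atTop_atTop.atTop_mul_const ha).eventually_gt_atTop b

theorem frequently_lt_birkhoffAverage_apply {c d : ℝ} (hcd : c < d) {x : Ω}
    (h : ∃ᶠ n in atTop, d < birkhoffAverage ℝ T f n x) :
    ∃ᶠ n in atTop, c < birkhoffAverage ℝ T f n (T x) := by
  rw [← map_add_atTop_eq_nat 1, frequently_map] at h
  refine (h.and_eventually ((eventually_lt_natCast_mul (sub_pos.2 hcd) (f x - d)).and
    (eventually_gt_atTop 0))).mono fun n ⟨hd, hlarge, hn⟩ ↦ ?_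
  rw [lt_birkhoffAverage_iff n.succ_pos, birkhoffSum_succ'] at hd
  rw [lt_birkhoffAverage_iff hn]
  push_cast at hd
  linarith

theorem frequently_lt_birkhoffAverage_of_apply {c d : ℝ} (hcd : c < d) {x : Ω}
    (h : ∃ᶠ n in atTop, d < birkhoffAverage ℝ T f n (T x)) :
    ∃ᶠ n in atTop, c < birkhoffAverage ℝ T f n x := by
  rw [← map_add_atTop_eq_nat 1, frequently_map]
  refine (h.and_eventually ((eventually_lt_natCast_mul (sub_pos.2 hcd) (c - f x)).and
    (eventually_gt_atTop 0))).mono fun n ⟨hd, hlarge, hn⟩ ↦ ?_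
  rw [lt_birkhoffAverage_iff hn] at hd
  rw [lt_birkhoffAverage_iff n.succ_pos, birkhoffSum_succ']
  push_cast
  linarith

theorem limsup_coe_le_limsup_coe_of_frequently {ι : Type*} {l : Filter ι} {u v : ι → ℝ}
    (h : ∀ ⦃c d : ℝ⦄, c < d → (∃ᶠ i in l, d < u i) → ∃ᶠ i in l, c < v i) :
    limsup (fun i ↦ (u i : EReal)) l ≤ limsup (fun i ↦ (v i : EReal)) l := by
  refine EReal.ge_of_forall_gt_iff_ge.1 fun c hc ↦ ?_
  obtain ⟨d, hcd, hd⟩ := EReal.lt_iff_exists_real_btwn.1 hc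
  have hu : ∃ᶠ i in l, d < u i :=
    (frequently_lt_of_lt_limsup (h := hd)).mono fun i hi ↦ EReal.coe_lt_coe_iff.1 hi
  exact le_limsup_of_frequently_le
    ((h (EReal.coe_lt_coe_iff.1 hcd) hu).mono fun i hi ↦ EReal.coe_le_coe_iff.2 hi.le)

/-- The upper limit of the Birkhoff averages of `f` at `x`, taken in the extended reals so that it
makes sense when the averages are unbounded. -/
noncomputable def birkhoffLimsup (T : Ω → Ω) (f : Ω → ℝ) (x : Ω) : EReal :=
  limsup (fun n ↦ ((birkhoffAverage ℝ T f n x : ℝ) : EReal)) atTop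

theorem birkhoffLimsup_apply (x : Ω) : birkhoffLimsup T f (T x) = birkhoffLimsup T f x :=
  le_antisymm
    (limsup_coe_le_limsup_coe_of_frequently fun _ _ h ↦ frequently_lt_birkhoffAverage_of_apply h)
    (limsup_coe_le_limsup_coe_of_frequently fun _ _ h ↦ frequently_lt_birkhoffAverage_apply h)

theorem birkhoffLimsup_neg (x : Ω) : birkhoffLimsup T (-f) x =
    -liminf (fun n ↦ ((birkhoffAverage ℝ T f n x : ℝ) : EReal)) atTop := by
  rw [← EReal.limsup_neg]
  simp only [birkhoffLimsup, birkhoffAverage_neg, Pi.neg_apply, EReal.coe_neg]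
  rfl

theorem exists_birkhoffSum_sub_const_pos {b : ℝ} {x : Ω} (h : b < birkhoffLimsup T f x) :
    ∃ n, 0 < birkhoffSum T (fun y ↦ f y - b) n x := by
  obtain ⟨n, hb, hn⟩ :=
    ((frequently_lt_of_lt_limsup (h := h)).and_eventually (eventually_gt_atTop 0)).exists
  rw [EReal.coe_lt_coe_iff, lt_birkhoffAverage_iff hn] at hb
  exact ⟨n, by simpa [birkhoffSum] using hb⟩

variable [MeasurableSpace Ω] {μ : Measure Ω}

theorem measurable_birkhoffLimsup (hT : Measurable T) (hf : Measurable f) :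
    Measurable (birkhoffLimsup T f) :=
  Measurable.limsup fun n ↦ ((Finset.measurable_sum _ fun i _ ↦
    hf.comp (hT.iterate i)).const_smul (n : ℝ)⁻¹).coe_real_ereal

variable {E : Type*} [NormedAddCommGroup E] [NormedSpace ℝ E] {φ : Ω → E}

theorem integral_birkhoffAverage (hT : MeasurePreserving T μ μ) (hφ : Integrable φ μ) {n : ℕ}
    (hn : n ≠ 0) : ∫ x, birkhoffAverage ℝ T φ n x ∂μ = ∫ x, φ x ∂μ := by
  have hiter (i : ℕ) : ∫ x, φ (T^[i] x) ∂μ = ∫ x, φ x ∂μ :=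
    integral_comp_of_measurePreserving (hT.iterate i) hφ.aestronglyMeasurable
  have hint (i : ℕ) : Integrable (fun x ↦ φ (T^[i] x)) μ :=
    (hT.iterate i).integrable_comp_of_integrable hφ
  simp only [birkhoffAverage, birkhoffSum]
  rw [integral_smul, integral_finsetSum _ fun i _ ↦ hint i]
  simp only [hiter, Finset.sum_const, Finset.card_range]
  rw [← Nat.cast_smul_eq_nsmul ℝ, inv_smul_smul₀ (Nat.cast_ne_zero.2 hn)]

variable [IsFiniteMeasure μ]

theorem mul_measureReal_le_setIntegral_of_lt_birkhoffLimsup (hT : MeasurePreserving T μ μ)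
    (hf : Integrable f μ) {b : ℝ} {s : Set Ω} (hs : MeasurableSet s) (hTs : T ⁻¹' s = s)
    (hb : ∀ x ∈ s, b < birkhoffLimsup T f x) : b * μ.real s ≤ ∫ x in s, f x ∂μ := by
  have hTrestrict : MeasurePreserving T (μ.restrict s) (μ.restrict s) := by
    simpa only [hTs] using hT.restrict_preimage hs
  have hpos : ∀ᵐ x ∂μ.restrict s, x ∈ {x | ∃ n, 0 < birkhoffSum T (fun y ↦ f y - b) n x} :=
    (ae_restrict_mem hs).mono fun x hx ↦ exists_birkhoffSum_sub_const_pos (hb x hx)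
  have hfb : Integrable (fun x ↦ f x - b) (μ.restrict s) :=
    hf.integrableOn.sub (integrable_const b)
  have hmax := setIntegral_exists_birkhoffSum_pos_nonneg hTrestrict hfb
  rw [Measure.restrict_eq_self_of_ae_mem hpos,
    integral_sub hf.integrableOn (integrable_const b)] at hmax
  simpa [mul_comm] using hmax

theorem ae_birkhoffLimsup_ne_top (hT : MeasurePreserving T μ μ) (hfm : Measurable f)
    (hf : Integrable f μ) : ∀ᵐ x ∂μ, birkhoffLimsup T f x ≠ ⊤ := by
  set s := {x | birkhoffLimsup T f x = ⊤} with hs_def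
  have hs : MeasurableSet s :=
    measurable_birkhoffLimsup hT.measurable hfm (measurableSet_singleton ⊤)
  have hTs : T ⁻¹' s = s := by ext x; simp [hs_def, birkhoffLimsup_apply]
  have hbound (b : ℝ) : b * μ.real s ≤ ∫ x in s, f x ∂μ :=
    mul_measureReal_le_setIntegral_of_lt_birkhoffLimsup hT hf hs hTs
      fun x (hx : _ = ⊤) ↦ hx ▸ EReal.coe_lt_top b
  have hzero : μ.real s = 0 := by
    by_contra hne
    have habsurd := hbound (((∫ x in s, f x ∂μ) + 1) / μ.real s)
    rw [div_mul_cancel₀ _ hne] at habsurd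
    linarith
  exact measure_eq_zero_iff_ae_notMem.1 ((measureReal_eq_zero_iff).1 hzero)

theorem ae_not_lt_birkhoffLimsup_and_lt_birkhoffLimsup_neg (hT : MeasurePreserving T μ μ)
    (hfm : Measurable f) (hf : Integrable f μ) {a b : ℝ} (hab : a < b) :
    ∀ᵐ x ∂μ, ¬ (b < birkhoffLimsup T f x ∧ (-a : ℝ) < birkhoffLimsup T (-f) x) := by
  set s := {x | b < birkhoffLimsup T f x ∧ (-a : ℝ) < birkhoffLimsup T (-f) x} with hs_def
  have hs : MeasurableSet s :=
    (measurableSet_lt measurable_const (measurable_birkhoffLimsup hT.measurable hfm)).inter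
      (measurableSet_lt measurable_const (measurable_birkhoffLimsup hT.measurable hfm.neg))
  have hTs : T ⁻¹' s = s := by ext x; simp [hs_def, birkhoffLimsup_apply]
  have hlower : b * μ.real s ≤ ∫ x in s, f x ∂μ :=
    mul_measureReal_le_setIntegral_of_lt_birkhoffLimsup hT hf hs hTs fun _ hx ↦ hx.1
  have hupper : -a * μ.real s ≤ ∫ x in s, (-f) x ∂μ :=
    mul_measureReal_le_setIntegral_of_lt_birkhoffLimsup hT hf.neg hs hTs fun _ hx ↦ hx.2
  simp only [Pi.neg_apply, integral_neg] at hupper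
  have hzero : μ.real s = 0 := by
    nlinarith [measureReal_nonneg (μ := μ) (s := s)]
  exact measure_eq_zero_iff_ae_notMem.1 ((measureReal_eq_zero_iff).1 hzero)

theorem ae_birkhoffLimsup_le_neg_birkhoffLimsup_neg (hT : MeasurePreserving T μ μ)
    (hfm : Measurable f) (hf : Integrable f μ) :
    ∀ᵐ x ∂μ, birkhoffLimsup T f x ≤ -birkhoffLimsup T (-f) x := by
  have hgap : ∀ᵐ x ∂μ, ∀ a b : ℚ, a < b →
      ¬ ((b : ℝ) < birkhoffLimsup T f x ∧ (-a : ℝ) < birkhoffLimsup T (-f) x) := by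
    simp only [ae_all_iff]
    exact fun a b hab ↦
      ae_not_lt_birkhoffLimsup_and_lt_birkhoffLimsup_neg hT hfm hf (Rat.cast_lt.2 hab)
  filter_upwards [hgap] with x hx
  by_contra! hlt
  obtain ⟨b, hab, hb⟩ := EReal.lt_iff_exists_rat_btwn.1 hlt
  obtain ⟨a, ha, hab⟩ := EReal.lt_iff_exists_rat_btwn.1 hab
  refine hx a b (Rat.cast_lt.1 (EReal.coe_lt_coe_iff.1 hab)) ⟨hb, ?_⟩
  rw [EReal.coe_neg]
  exact EReal.neg_lt_comm.1 ha

theorem ae_exists_tendsto_birkhoffAverage_of_measurable (hT : MeasurePreserving T μ μ)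
    (hfm : Measurable f) (hf : Integrable f μ) :
    ∀ᵐ x ∂μ, ∃ l, Tendsto (birkhoffAverage ℝ T f · x) atTop (𝓝 l) := by
  filter_upwards [ae_birkhoffLimsup_le_neg_birkhoffLimsup_neg hT hfm hf,
    ae_birkhoffLimsup_ne_top hT hfm hf, ae_birkhoffLimsup_ne_top hT hfm.neg hf.neg]
    with x hle htop hbot
  rw [birkhoffLimsup_neg, neg_neg] at hle
  rw [birkhoffLimsup_neg, Ne, EReal.neg_eq_top_iff] at hbot
  have heq := le_antisymm liminf_le_limsup hle
  obtain ⟨l, hl⟩ : ∃ l : ℝ, (l : EReal) = birkhoffLimsup T f x :=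
    ⟨_, EReal.coe_toReal htop (by rwa [birkhoffLimsup, ← heq])⟩
  exact ⟨l, EReal.tendsto_coe.1 (tendsto_of_liminf_eq_limsup (heq.trans hl.symm) hl.symm)⟩

theorem ae_exists_tendsto_birkhoffAverage_real (hT : MeasurePreserving T μ μ)
    (hf : Integrable f μ) :
    ∀ᵐ x ∂μ, ∃ l, Tendsto (birkhoffAverage ℝ T f · x) atTop (𝓝 l) := by
  have hfm : AEMeasurable f μ := hf.aemeasurable
  have hcongr : ∀ᵐ x ∂μ, ∀ n, birkhoffAverage ℝ T f n x = birkhoffAverage ℝ T (hfm.mk f) n x :=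
    ae_all_iff.2 (hT.quasiMeasurePreserving.birkhoffAverage_ae_eq_of_ae_eq ℝ hfm.ae_eq_mk)
  filter_upwards [hcongr, ae_exists_tendsto_birkhoffAverage_of_measurable hT hfm.measurable_mk
    (hf.congr hfm.ae_eq_mk)] with x hx hlim
  simpa only [hx] using hlim

theorem ae_exists_tendsto_birkhoffAverage [FiniteDimensional ℝ E] (hT : MeasurePreserving T μ μ)
    (hφ : Integrable φ μ) :
    ∀ᵐ x ∂μ, ∃ v, Tendsto (birkhoffAverage ℝ T φ · x) atTop (𝓝 v) := by
  let e : E ≃L[ℝ] (Fin (Module.finrank ℝ E) → ℝ) := (Module.finBasis ℝ E).equivFunL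
  let coord (j : Fin (Module.finrank ℝ E)) : E →L[ℝ] ℝ :=
    (ContinuousLinearMap.proj (φ := fun _ ↦ ℝ) j).comp e.toContinuousLinearMap
  have hcoord : ∀ᵐ x ∂μ, ∀ j, ∃ l,
      Tendsto (birkhoffAverage ℝ T (coord j ∘ φ) · x) atTop (𝓝 l) :=
    ae_all_iff.2 fun j ↦
      ae_exists_tendsto_birkhoffAverage_real hT ((coord j).integrable_comp hφ)
  filter_upwards [hcoord] with x hx
  choose w hw using hx
  have hlim : Tendsto (fun n ↦ e (birkhoffAverage ℝ T φ n x)) atTop (𝓝 w) :=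
    tendsto_pi_nhds.2 fun j ↦ by
      simpa only [← map_birkhoffAverage ℝ ℝ (coord j)] using! hw j
  exact ⟨e.symm w, by simpa [Function.comp_def] using (e.symm.continuous.tendsto w).comp hlim⟩

theorem uniformIntegrable_birkhoffAverage (hT : MeasurePreserving T μ μ) (hφ : Integrable φ μ) :
    UniformIntegrable (birkhoffAverage ℝ T φ) 1 μ := by
  borelize E
  have hident (i : ℕ) : ProbabilityTheory.IdentDistrib (φ ∘ T^[i]) (φ ∘ T^[0]) μ μ :=
    identDistrib_comp_of_measurePreserving (hT.iterate i) hφ.aestronglyMeasurable.aemeasurable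
  have haverage := uniformIntegrable_average le_rfl
    (ProbabilityTheory.MemLp.uniformIntegrable_of_identDistrib le_rfl ENNReal.one_ne_top
      (memLp_one_iff_integrable.2 hφ) hident)
  convert! haverage using 2 with n
  ext x
  simp [birkhoffAverage, birkhoffSum]

theorem integrable_of_ae_tendsto_birkhoffAverage (hT : MeasurePreserving T μ μ)
    (hφ : Integrable φ μ) {ψ : Ω → E}
    (hψ : ∀ᵐ x ∂μ, Tendsto (birkhoffAverage ℝ T φ · x) atTop (𝓝 (ψ x))) : Integrable ψ μ :=
  memLp_one_iff_integrable.1 ((uniformIntegrable_birkhoffAverage hT hφ).memLp_of_ae_tendsto hψ)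

theorem integral_eq_of_ae_tendsto_birkhoffAverage (hT : MeasurePreserving T μ μ)
    (hφ : Integrable φ μ) {ψ : Ω → E}
    (hψ : ∀ᵐ x ∂μ, Tendsto (birkhoffAverage ℝ T φ · x) atTop (𝓝 (ψ x))) :
    ∫ x, ψ x ∂μ = ∫ x, φ x ∂μ := by
  have hUI := uniformIntegrable_birkhoffAverage hT hφ
  have hψi := integrable_of_ae_tendsto_birkhoffAverage hT hφ hψ
  have hL1 := tendsto_Lp_finite_of_tendsto_ae le_rfl ENNReal.one_ne_top
    (fun n ↦ (hUI.memLp n).aestronglyMeasurable) (memLp_one_iff_integrable.2 hψi) hUI.2.1 hψ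
  have hlim := tendsto_integral_of_L1' ψ hψi.aestronglyMeasurable
    (Eventually.of_forall fun n ↦ memLp_one_iff_integrable.1 (hUI.memLp n)) hL1
  refine tendsto_nhds_unique hlim (tendsto_const_nhds.congr' ?_)
  filter_upwards [eventually_ne_atTop 0] with n hn
  exact (integral_birkhoffAverage hT hφ hn).symm

end PointwiseErgodicTheorem

section InvariantMeasure

variable {Z : Type*} {g : Z → Z} {ι : Type*} {l : Filter ι} {z : ι → Z} {r : ι → ℕ}
  {E : Type*} [NormedAddCommGroup E] [NormedSpace ℝ E]

theorem birkhoffAverage_comp_self {R M : Type*} [DivisionSemiring R] [AddCommMonoid M]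
    [Module R M] (f : Z → M) (n : ℕ) (z : Z) :
    birkhoffAverage R g (f ∘ g) n z = birkhoffAverage R g f n (g z) := by
  simp only [birkhoffAverage, birkhoffSum, Function.comp_apply,
    (Function.Commute.self_iterate g _).eq]

theorem tendsto_birkhoffAverage_apply_sub_birkhoffAverage_of_tendsto {f : Z → E}
    (hf : Bornology.IsBounded (Set.range f)) (hr : Tendsto r l atTop) :
    Tendsto (fun i ↦ birkhoffAverage ℝ g f (r i) (g (z i)) - birkhoffAverage ℝ g f (r i) (z i)) l
      (𝓝 0) := by
  obtain ⟨C, hC⟩ := Metric.isBounded_range_iff.1 hf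
  refine squeeze_zero_norm (fun i ↦ ?_)
    (tendsto_const_nhds.div_atTop (a := C) (tendsto_natCast_atTop_atTop.comp hr))
  rw [← dist_eq_norm, dist_birkhoffAverage_apply_birkhoffAverage]
  exact div_le_div_of_nonneg_right (hC _ _) (Nat.cast_nonneg _)

variable [MeasurableSpace Z]

/-- The uniform distribution on the orbit segment `z, g z, …, gⁿ⁻¹ z`; it is the zero measure when
`n = 0`. -/
noncomputable def empiricalMeasure (g : Z → Z) (n : ℕ) (z : Z) : Measure Z :=
  (n : ENNReal)⁻¹ • ∑ i ∈ Finset.range n, Measure.dirac (g^[i] z)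

theorem isProbabilityMeasure_empiricalMeasure {n : ℕ} (hn : n ≠ 0) (z : Z) :
    IsProbabilityMeasure (empiricalMeasure g n z) where
  measure_univ := by
    simp [empiricalMeasure, ENNReal.inv_mul_cancel, hn]

theorem integral_empiricalMeasure [MeasurableSingletonClass Z] [CompleteSpace E]
    (f : Z → E) (n : ℕ) (z : Z) :
    ∫ x, f x ∂empiricalMeasure g n z = birkhoffAverage ℝ g f n z := by
  rw [empiricalMeasure, integral_smul_measure,
    integral_finsetSum_measure fun i _ ↦ integrable_dirac enorm_lt_top]
  simp [birkhoffAverage, birkhoffSum]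

variable [TopologicalSpace Z] [BorelSpace Z] {μ : Measure Z} [IsFiniteMeasure μ]

theorem measurePreserving_of_forall_tendsto_birkhoffAverage [HasOuterApproxClosed Z] [NeBot l]
    (hg : Continuous g) (hr : Tendsto r l atTop)
    (hμ : ∀ f : BoundedContinuousFunction Z ℝ,
      Tendsto (fun i ↦ birkhoffAverage ℝ g f (r i) (z i)) l (𝓝 (∫ x, f x ∂μ))) :
    MeasurePreserving g μ μ := by
  refine ⟨hg.measurable, ext_of_forall_integral_eq_of_IsFiniteMeasure fun f ↦ ?_⟩
  rw [integral_map hg.aemeasurable f.continuous.aestronglyMeasurable]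
  have hshift :
      Tendsto (fun i ↦ birkhoffAverage ℝ g f (r i) (g (z i))) l (𝓝 (∫ x, f (g x) ∂μ)) := by
    simpa only [BoundedContinuousFunction.coe_compContinuous, ContinuousMap.coe_mk,
      birkhoffAverage_comp_self, Function.comp_apply] using hμ (f.compContinuous ⟨g, hg⟩)
  refine sub_eq_zero.1 (tendsto_nhds_unique (hshift.sub (hμ f)) ?_)
  exact tendsto_birkhoffAverage_apply_sub_birkhoffAverage_of_tendsto f.isBounded_range hr

variable [CompactSpace Z]

theorem integral_eq_of_forall_tendsto_birkhoffAverage [NeBot l] [CompleteSpace E]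
    {φ : Z → E} (hφ : Continuous φ)
    (hμ : ∀ f : BoundedContinuousFunction Z ℝ,
      Tendsto (fun i ↦ birkhoffAverage ℝ g f (r i) (z i)) l (𝓝 (∫ x, f x ∂μ))) {v : E}
    (hv : Tendsto (fun i ↦ birkhoffAverage ℝ g φ (r i) (z i)) l (𝓝 v)) :
    ∫ x, φ x ∂μ = v := by
  have hφi : Integrable φ μ := hφ.integrable_of_hasCompactSupport (.of_compactSpace φ)
  refine (SeparatingDual.eq_iff_forall_dual_eq (R := ℝ)).2 fun L ↦ ?_
  rw [← L.integral_comp_comm hφi]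
  have hL := (L.continuous.tendsto v).comp hv
  simp only [Function.comp_def, map_birkhoffAverage ℝ ℝ L] at hL
  exact tendsto_nhds_unique (hμ (.mkOfCompact ⟨_, L.continuous.comp hφ⟩)) hL

theorem exists_probabilityMeasure_forall_tendsto_birkhoffAverage [T2Space Z] {U : Ultrafilter ι}
    (hr : Tendsto r U atTop) :
    ∃ P : ProbabilityMeasure Z, ∀ f : BoundedContinuousFunction Z ℝ,
      Tendsto (fun i ↦ birkhoffAverage ℝ g f (r i) (z i)) U (𝓝 (∫ x, f x ∂P)) := by
  have hex : ∀ᶠ i in (U : Filter ι), ∃ Q : ProbabilityMeasure Z,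
      (Q : Measure Z) = empiricalMeasure g (r i) (z i) := by
    filter_upwards [hr.eventually_ne_atTop 0] with i hi
    exact ⟨⟨_, isProbabilityMeasure_empiricalMeasure hi (z i)⟩, rfl⟩
  obtain ⟨Q, hQ⟩ := hex.choice
  obtain ⟨P, -, hP⟩ := isCompact_univ.ultrafilter_le_nhds (U.map Q) (by simp)
  refine ⟨P, fun f ↦ (ProbabilityMeasure.tendsto_iff_forall_integral_tendsto.1 hP f).congr' ?_⟩
  filter_upwards [hQ] with i hi
  rw [hi, integral_empiricalMeasure]

theorem exists_measurePreserving_integral_eq_of_tendsto_birkhoffAverage [NeBot l]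
    [T2Space Z] [HasOuterApproxClosed Z] [CompleteSpace E] (hg : Continuous g) {φ : Z → E}
    (hφ : Continuous φ) (hr : Tendsto r l atTop) {v : E}
    (hv : Tendsto (fun i ↦ birkhoffAverage ℝ g φ (r i) (z i)) l (𝓝 v)) :
    ∃ μ : Measure Z, IsProbabilityMeasure μ ∧ MeasurePreserving g μ μ ∧ ∫ x, φ x ∂μ = v := by
  have hle := Ultrafilter.of_le l
  obtain ⟨P, hP⟩ := exists_probabilityMeasure_forall_tendsto_birkhoffAverage (g := g) (z := z)
    (hr.mono_left hle)
  exact ⟨P, inferInstance,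
    measurePreserving_of_forall_tendsto_birkhoffAverage hg (hr.mono_left hle) hP,
    integral_eq_of_forall_tendsto_birkhoffAverage hφ hP (hv.mono_left hle)⟩

end InvariantMeasure

section Recurrence

variable {Z : Type*} [TopologicalSpace Z] [SecondCountableTopology Z] [MeasurableSpace Z]
  [OpensMeasurableSpace Z] {g : Z → Z}

theorem ae_mem_RecSet {μ : Measure Z} [IsFiniteMeasure μ] (hg : MeasurePreserving g μ μ) :
    ∀ᵐ z ∂μ, z ∈ RecSet g := by
  filter_upwards [hg.conservative.ae_frequently_mem_of_mem_nhds] with z hz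
  have hcluster : MapClusterPt z atTop fun n ↦ g^[n] z := mapClusterPt_iff_frequently.2 hz
  obtain ⟨r, hr, hlim⟩ := hcluster.tendsto_subseq
  exact ⟨r, hr.tendsto_atTop, hlim⟩

end Recurrence

section RotationSets

variable {Z : Type*} {k : ℕ} {g : Z → Z} {φ : Z → Fin k → ℝ}

theorem rotPOn_mono {V W : Set Z} (h : V ⊆ W) : rotPOn g φ V ⊆ rotPOn g φ W :=
  fun _ ⟨z, hz, hv⟩ ↦ ⟨z, h hz, hv⟩

theorem rotPOn_subset_rotMZ (W : Set Z) : rotPOn g φ W ⊆ rotMZ g φ :=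
  fun _ ⟨z, _, hv⟩ ↦ ⟨fun _ ↦ z, id, tendsto_id, hv⟩

variable [TopologicalSpace Z] [CompactSpace Z] [MeasurableSpace Z] [BorelSpace Z]

theorem rotMZ_subset_rotM [T2Space Z] [HasOuterApproxClosed Z] (hg : Continuous g)
    (hφ : Continuous φ) : rotMZ g φ ⊆ rotM g φ :=
  fun _ ⟨_, _, hr, hv⟩ ↦
    exists_measurePreserving_integral_eq_of_tendsto_birkhoffAverage hg hφ hr hv

theorem rotM_subset_convexHull_rotPOn_RecSet [SecondCountableTopology Z] (hφ : Continuous φ) :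
    rotM g φ ⊆ convexHull ℝ (rotPOn g φ (RecSet g)) := by
  rintro _ ⟨μ, _, hg, rfl⟩
  have hφi : Integrable φ μ := hφ.integrable_of_hasCompactSupport (.of_compactSpace φ)
  have hlim := ae_exists_tendsto_birkhoffAverage hg hφi
  choose! ψ hψ using fun z (h : ∃ v, Tendsto (birkhoffAverage ℝ g φ · z) atTop (𝓝 v)) ↦ h
  have hψlim : ∀ᵐ z ∂μ, Tendsto (birkhoffAverage ℝ g φ · z) atTop (𝓝 (ψ z)) := hlim.mono hψ
  have hψmem : ∀ᵐ z ∂μ, ψ z ∈ convexHull ℝ (rotPOn g φ (RecSet g)) := by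
    filter_upwards [hψlim, ae_mem_RecSet hg] with z hz hrec
    exact subset_convexHull ℝ _ ⟨z, hrec, hz⟩
  rw [← integral_eq_of_ae_tendsto_birkhoffAverage hg hφi hψlim]
  exact integral_mem_of_convex_of_finiteDimensional (convex_convexHull ℝ _)
    (integrable_of_ae_tendsto_birkhoffAverage hg hφi hψlim) hψmem

end RotationSets

theorem rotMZ_subset_convexHull_rotPOn_RecSet {Z : Type*} [MetricSpace Z] [CompactSpace Z] {k : ℕ}
    {g : Z → Z} (hg : Continuous g) {φ : Z → Fin k → ℝ} (hφ : Continuous φ) :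
    rotMZ g φ ⊆ convexHull ℝ (rotPOn g φ (RecSet g)) := by
  borelize Z
  exact (rotMZ_subset_rotM hg hφ).trans (rotM_subset_convexHull_rotPOn_RecSet hφ)

theorem stmt2_general {Z : Type*} [MetricSpace Z] [CompactSpace Z]
    {k : ℕ} (g : Z → Z) (hg : Continuous g) (φ : Z → Fin k → ℝ) (hφ : Continuous φ) :
    convexHull ℝ (rotPOn g φ (RecSet g)) = convexHull ℝ (rotMZ g φ) ∧
    ∀ W : Set Z, RecSet g ⊆ W → Convex ℝ (rotPOn g φ W) → rotPOn g φ W = rotMZ g φ := by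
  have hMZ := rotMZ_subset_convexHull_rotPOn_RecSet hg hφ
  refine ⟨(convexHull_mono (rotPOn_subset_rotMZ _)).antisymm
    (convexHull_min hMZ (convex_convexHull ℝ _)), fun W hW hconv ↦ ?_⟩
  exact (rotPOn_subset_rotMZ W).antisymm (hMZ.trans (convexHull_min (rotPOn_mono hW) hconv))

/-- The convex hull of the pointwise rotation set over the recurrent set
equals the convex hull of the Misiurewicz–Ziemian rotation set; and if `W` is a
`g`-invariant set containing the recurrent set whose pointwise rotation set is convex,
then the latter equals the Misiurewicz–Ziemian rotation set. -/
theorem stmt2 {Z : Type*} [MetricSpace Z] [CompactSpace Z]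
    {k : ℕ} (g : Z → Z) (hg : Continuous g) (φ : Z → Fin k → ℝ) (hφ : Continuous φ) :
    convexHull ℝ (rotPOn g φ (RecSet g)) = convexHull ℝ (rotMZ g φ) ∧
    ∀ W : Set Z, Set.MapsTo g W W → RecSet g ⊆ W → Convex ℝ (rotPOn g φ W) →
      rotPOn g φ W = rotMZ g φ :=
  let ⟨hhull, hW⟩ := stmt2_general g hg φ hφ
  ⟨hhull, fun W _ ↦ hW W⟩
end

section
/- Let Z be a compact metric space, g : Z → Z a continuous map, and φ : Z → ℝ^k a bounded function. Let W ⊆ Z and K ∈ ℕ be such that for every z ∈ Z there is some r with 1 ≤ r ≤ K and gʳ(z) ∈ W. Define N : W → ℕ by N(w) = min{r ≥ 1 : gʳ(w) ∈ W} and the return map R : W → W by R(w) = g^{N(w)}(w). Suppose Δ is a compact convex subset of ℝ^ℓ, β : W → Δ is a function, and L : ℝ^ℓ → ℝ^k, M : ℝ^ℓ → ℝ are linear maps such that φ_g(w, N(w)) = L(β(w)) and N(w) = M(β(w)) for all w ∈ W, that M(v) > 0 for all v ∈ Δ, and that the map Q : Δ → ℝ^k, Q(v) = L(v)/M(v), is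 injective on Δ. Then rot_p(Z,g,φ) = Q(rot_p(W,R,β)), where rot_p(W,R,β) = {lim_{r→∞} β_R(w,r)/r : w ∈ W, the limit exists} and β_R(w,r) = Σ_{i=0}^{r-1} β(Rⁱ(w)). -/
open Filter Topology MeasureTheory

/-!
Sampled at the successive return times of a point `w ∈ W`, the Birkhoff averages of `φ` under `g`
are exactly the images under `Q = L / M` of the Birkhoff averages of `β` under `R`, because `L` and
`M` are linear and `Q` is homogeneous of degree `0`. The averages of `β` stay in the convex set `Δ`.
On the compact set `Δ` the map `Q` is a homeomorphism onto its image, so one of the two sampled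
sequences converges if and only if the other does. Finally, the gaps between return times are
bounded (they are values of `M` on `Δ`) and `φ` is bounded, so sampling at return times does not
affect convergence of the averages of `φ`; and every orbit enters `W`, while the averages of `φ`
along an orbit have the same limit from any of its points.
-/

open Set Bornology

theorem exists_tendsto_of_tendsto_comp_of_injOn {ι X Y : Type*} [TopologicalSpace X]
    [TopologicalSpace Y] [T2Space Y] {l : Filter ι} [l.NeBot] {s : Set X} {q : X → Y} {a : ι → X}
    {y : Y} (hs : IsCompact s) (hq : ContinuousOn q s) (hinj : InjOn q s)
    (ha : ∀ᶠ i in l, a i ∈ s) (hy : Tendsto (q ∘ a) l (𝓝 y)) :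
    ∃ x, Tendsto a l (𝓝 x) ∧ q x = y := by
  have hy_mem : y ∈ q '' s :=
    (hs.image_of_continuousOn hq).isClosed.mem_of_tendsto hy <|
      ha.mono fun _ hi ↦ mem_image_of_mem q hi
  obtain ⟨x, hx, rfl⟩ := hy_mem
  refine ⟨x, hs.tendsto_nhds_of_unique_mapClusterPt ha fun x' hx' hcluster ↦ ?_, rfl⟩
  obtain ⟨U, hU, hUx'⟩ := mapClusterPt_iff_ultrafilter.1 hcluster
  have hqx' : Tendsto (q ∘ a) U (𝓝 (q x')) :=
    (hq x' hx').tendsto.comp (tendsto_nhdsWithin_iff.2 ⟨hUx', hU ha⟩)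
  exact hinj hx' hx (tendsto_nhds_unique hqx' (hy.mono_left hU))

theorem exists_le_le_add_of_bounded_gaps {t : ℕ → ℕ} {K : ℕ} (ht : Tendsto t atTop atTop)
    (hgap : ∀ n, t (n + 1) ≤ t n + K) {m r : ℕ} (hr : t m ≤ r) :
    ∃ n ≥ m, t n ≤ r ∧ r ≤ t n + K := by
  have hexceed : ∃ n, r < t (m + n) := by
    obtain ⟨n, hn, hmn⟩ := ((ht.eventually_gt_atTop r).and (eventually_ge_atTop m)).exists
    exact ⟨n - m, by rwa [Nat.add_sub_cancel' hmn]⟩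
  classical
  obtain ⟨n, hn⟩ : ∃ n, Nat.find hexceed = n + 1 :=
    Nat.exists_eq_succ_of_ne_zero fun h ↦ hr.not_gt (by simpa [h] using Nat.find_spec hexceed)
  have hlast : t (m + n) ≤ r := not_lt.1 (Nat.find_min hexceed (by lia))
  have hnext : r < t (m + n + 1) := by simpa [hn, add_assoc] using Nat.find_spec hexceed
  exact ⟨m + n, Nat.le_add_right m n, hlast, hnext.le.trans (hgap _)⟩

section BirkhoffSums

variable {Z : Type*} {f : Z → Z} {s : Set Z} {x : Z}

theorem birkhoffSum_eq_of_eqOn {E : Type*} [AddCommMonoid E] {φ ψ : Z → E} (hf : MapsTo f s s)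
    (h : EqOn φ ψ s) (hx : x ∈ s) (n : ℕ) : birkhoffSum f φ n x = birkhoffSum f ψ n x :=
  Finset.sum_congr rfl fun i _ ↦ h (hf.iterate i hx)

theorem birkhoffAverage_mem_of_convex {𝕜 E : Type*} [Field 𝕜] [LinearOrder 𝕜]
    [IsStrictOrderedRing 𝕜] [AddCommGroup E] [Module 𝕜 E] {φ : Z → E} {Δ : Set E}
    (hΔ : Convex 𝕜 Δ) (hf : MapsTo f s s) (hφ : MapsTo φ s Δ) (hx : x ∈ s) {n : ℕ} (hn : n ≠ 0) :
    birkhoffAverage 𝕜 f φ n x ∈ Δ := by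
  rw [birkhoffAverage, birkhoffSum, Finset.smul_sum]
  exact hΔ.sum_mem (fun i _ ↦ by positivity) (by simp [hn]) fun i _ ↦ hφ (hf.iterate i hx)

theorem birkhoffAverage_add_sub_birkhoffAverage {𝕜 E : Type*} [Field 𝕜] [CharZero 𝕜]
    [AddCommGroup E] [Module 𝕜 E] (f : Z → Z) (φ : Z → E) (m d : ℕ) (x : Z) :
    birkhoffAverage 𝕜 f φ (m + d) x - birkhoffAverage 𝕜 f φ m x =
      (d / (m + d : ℕ) : 𝕜) •
        (birkhoffAverage 𝕜 f φ d (f^[m] x) - birkhoffAverage 𝕜 f φ m x) := by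
  rcases eq_or_ne m 0 with rfl | hm
  · rcases eq_or_ne d 0 with rfl | hd <;> simp [*]
  rcases eq_or_ne d 0 with rfl | hd
  · simp
  have hmd : (m + d : 𝕜) ≠ 0 := mod_cast (by lia : m + d ≠ 0)
  simp only [birkhoffAverage, birkhoffSum_add, Nat.cast_add]
  match_scalars <;> field_simp
  ring

variable {E : Type*} [NormedAddCommGroup E] [NormedSpace ℝ E] {φ : Z → E}

theorem norm_birkhoffAverage_le {C : ℝ} (hC : ∀ z, ‖φ z‖ ≤ C) (f : Z → Z) (n : ℕ) (x : Z) :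
    ‖birkhoffAverage ℝ f φ n x‖ ≤ C := by
  rcases eq_or_ne n 0 with rfl | hn
  · simpa using (norm_nonneg _).trans (hC x)
  · simpa using birkhoffAverage_mem_of_convex (convex_closedBall (0 : E) C) (mapsTo_univ f univ)
      (fun z _ ↦ by simpa using hC z) (mem_univ x) hn

theorem dist_birkhoffAverage_le_of_le_add {C : ℝ} (hC : ∀ z, ‖φ z‖ ≤ C) (f : Z → Z) (x : Z)
    {m r K : ℕ} (hmr : m ≤ r) (hrK : r ≤ m + K) :
    dist (birkhoffAverage ℝ f φ r x) (birkhoffAverage ℝ f φ m x) ≤ K * (C + C) / r := by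
  obtain ⟨d, rfl⟩ := Nat.exists_eq_add_of_le hmr
  have hd : (d : ℝ) ≤ K := mod_cast (by lia : d ≤ K)
  rw [dist_eq_norm, birkhoffAverage_add_sub_birkhoffAverage, norm_smul,
    Real.norm_of_nonneg (by positivity), mul_div_right_comm]
  gcongr
  exact norm_sub_le_of_le (norm_birkhoffAverage_le hC f d _) (norm_birkhoffAverage_le hC f m x)

theorem tendsto_birkhoffAverage_of_bounded_gaps (hφ : IsBounded (range φ)) {t : ℕ → ℕ} {K : ℕ}
    (ht : Tendsto t atTop atTop) (hgap : ∀ n, t (n + 1) ≤ t n + K) {v : E}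
    (hv : Tendsto (fun n ↦ birkhoffAverage ℝ f φ (t n) x) atTop (𝓝 v)) :
    Tendsto (birkhoffAverage ℝ f φ · x) atTop (𝓝 v) := by
  obtain ⟨C, hC⟩ := hφ.exists_norm_le
  rw [forall_mem_range] at hC
  have herror : Tendsto (fun r : ℕ ↦ K * (C + C) / (r : ℝ)) atTop (𝓝 0) :=
    tendsto_const_nhds.div_atTop tendsto_natCast_atTop_atTop
  refine Metric.tendsto_nhds.2 fun ε hε ↦ ?_
  obtain ⟨m, hm⟩ := eventually_atTop.1 (Metric.tendsto_nhds.1 hv (ε / 2) (half_pos hε))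
  filter_upwards [eventually_ge_atTop (t m), herror.eventually_lt_const (half_pos hε)]
    with r hr hrε
  obtain ⟨n, hmn, hnr, hrn⟩ := exists_le_le_add_of_bounded_gaps ht hgap hr
  calc dist (birkhoffAverage ℝ f φ r x) v
      ≤ dist (birkhoffAverage ℝ f φ r x) (birkhoffAverage ℝ f φ (t n) x) +
        dist (birkhoffAverage ℝ f φ (t n) x) v := dist_triangle _ _ _
    _ < ε / 2 + ε / 2 :=
        add_lt_add ((dist_birkhoffAverage_le_of_le_add hC f x hnr hrn).trans_lt hrε) (hm n hmn)
    _ = ε := add_halves ε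

theorem tendsto_birkhoffAverage_iterate (hφ : IsBounded (range φ)) {v : E}
    (hv : Tendsto (birkhoffAverage ℝ f φ · x) atTop (𝓝 v)) (m : ℕ) :
    Tendsto (birkhoffAverage ℝ f φ · (f^[m] x)) atTop (𝓝 v) := by
  induction m with
  | zero => exact hv
  | succ m ih =>
    rw [Function.iterate_succ_apply']
    simpa using (tendsto_birkhoffAverage_apply_sub_birkhoffAverage' ℝ hφ f (f^[m] x)).add ih

end BirkhoffSums

section RatioMap

variable {𝕜 E F : Type*} [Field 𝕜] [AddCommGroup E] [Module 𝕜 E] [AddCommGroup F] [Module 𝕜 F]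

/-- The projective map `v ↦ L v / M v` attached to a linear map `L` and a linear functional `M`,
denoted `Q` in the theorem. It takes the junk value `0` where `M` vanishes. -/
def ratioMap (L : F →ₗ[𝕜] E) (M : F →ₗ[𝕜] 𝕜) (v : F) : E :=
  (M v)⁻¹ • L v

theorem ratioMap_smul (L : F →ₗ[𝕜] E) (M : F →ₗ[𝕜] 𝕜) {c : 𝕜} (hc : c ≠ 0) (v : F) :
    ratioMap L M (c • v) = ratioMap L M v := by
  simp only [ratioMap, map_smul, smul_smul, smul_eq_mul, mul_inv_rev]
  rw [inv_mul_cancel_right₀ hc]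

theorem continuousOn_ratioMap [TopologicalSpace 𝕜] [ContinuousInv₀ 𝕜] [TopologicalSpace E]
    [ContinuousSMul 𝕜 E] [TopologicalSpace F] {L : F →ₗ[𝕜] E} {M : F →ₗ[𝕜] 𝕜}
    (hL : Continuous L) (hM : Continuous M) {Δ : Set F} (hΔ : ∀ v ∈ Δ, M v ≠ 0) :
    ContinuousOn (ratioMap L M) Δ :=
  (hM.continuousOn.inv₀ hΔ).smul hL.continuousOn

end RatioMap

/-- `R` is a return map of `g` to `W` with return time `N`: it preserves `W`, and on `W` it is the
`N`-th iterate of `g`. The return need not be the first one. Only the values of `N` and `R` on `W`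
matter. -/
structure IsReturnMap {Z : Type*} (g : Z → Z) (W : Set Z) (N : Z → ℕ) (R : Z → Z) : Prop where
  mapsTo : MapsTo R W W
  eq_iterate : ∀ w ∈ W, R w = g^[N w] w

namespace IsReturnMap

variable {Z : Type*} {g R : Z → Z} {W : Set Z} {N : Z → ℕ} {w : Z}

theorem iterate_eq (h : IsReturnMap g W N R) (hw : w ∈ W) (n : ℕ) :
    R^[n] w = g^[birkhoffSum R N n w] w := by
  induction n with
  | zero => simp
  | succ n ih =>
    rw [Function.iterate_succ_apply', h.eq_iterate _ (h.mapsTo.iterate n hw), birkhoffSum_succ,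
      add_comm, Function.iterate_add_apply, ← ih]

theorem birkhoffSum_returnTime {E : Type*} [AddCommMonoid E] (h : IsReturnMap g W N R)
    (φ : Z → E) (hw : w ∈ W) (n : ℕ) :
    birkhoffSum g φ (birkhoffSum R N n w) w =
      birkhoffSum R (fun z ↦ birkhoffSum g φ (N z) z) n w := by
  induction n with
  | zero => simp
  | succ n ih => rw [birkhoffSum_succ, birkhoffSum_add, ih, ← h.iterate_eq hw, birkhoffSum_succ]

theorem birkhoffAverage_returnTime {𝕜 E F : Type*} [Field 𝕜] [CharZero 𝕜] [AddCommGroup E]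
    [Module 𝕜 E] [AddCommGroup F] [Module 𝕜 F] {φ : Z → E} {β : Z → F} {L : F →ₗ[𝕜] E}
    {M : F →ₗ[𝕜] 𝕜} (h : IsReturnMap g W N R)
    (hL : ∀ w ∈ W, birkhoffSum g φ (N w) w = L (β w)) (hM : ∀ w ∈ W, (N w : 𝕜) = M (β w))
    (hw : w ∈ W) (n : ℕ) :
    birkhoffAverage 𝕜 g φ (birkhoffSum R N n w) w = ratioMap L M (birkhoffAverage 𝕜 R β n w) := by
  rcases eq_or_ne n 0 with rfl | hn
  · simp [ratioMap]
  have hL_sum : birkhoffSum g φ (birkhoffSum R N n w) w = L (birkhoffSum R β n w) := by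
    rw [h.birkhoffSum_returnTime φ hw, map_birkhoffSum]
    exact birkhoffSum_eq_of_eqOn h.mapsTo hL hw n
  have hM_sum : ((birkhoffSum R N n w : ℕ) : 𝕜) = M (birkhoffSum R β n w) := by
    rw [← Nat.coe_castAddMonoidHom, map_birkhoffSum, map_birkhoffSum]
    exact birkhoffSum_eq_of_eqOn h.mapsTo hM hw n
  rw [birkhoffAverage, birkhoffAverage, ratioMap_smul L M (by simpa using hn), hL_sum, hM_sum,
    ratioMap]

theorem tendsto_returnTime (h : IsReturnMap g W N R) (hN : ∀ w ∈ W, 1 ≤ N w) (hw : w ∈ W) :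
    Tendsto (fun n ↦ birkhoffSum R N n w) atTop atTop := by
  refine tendsto_atTop_mono (fun n ↦ ?_) tendsto_id
  simpa [birkhoffSum] using Finset.card_nsmul_le_sum (Finset.range n) (fun i ↦ N (R^[i] w)) 1
    fun i _ ↦ hN _ (h.mapsTo.iterate i hw)

theorem tendsto_birkhoffAverage_iff {E : Type*} [NormedAddCommGroup E] [NormedSpace ℝ E]
    {φ : Z → E} {K : ℕ} (h : IsReturnMap g W N R) (hφ : IsBounded (range φ))
    (hN : ∀ w ∈ W, 1 ≤ N w) (hNK : ∀ w ∈ W, N w ≤ K) (hw : w ∈ W) {u : E} :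
    Tendsto (birkhoffAverage ℝ g φ · w) atTop (𝓝 u) ↔
      Tendsto (fun n ↦ birkhoffAverage ℝ g φ (birkhoffSum R N n w) w) atTop (𝓝 u) := by
  have hgap (n : ℕ) : birkhoffSum R N (n + 1) w ≤ birkhoffSum R N n w + K := by
    rw [birkhoffSum_succ]
    gcongr
    exact hNK _ (h.mapsTo.iterate n hw)
  have htendsto := h.tendsto_returnTime hN hw
  exact ⟨fun hu ↦ hu.comp htendsto, tendsto_birkhoffAverage_of_bounded_gaps hφ htendsto hgap⟩

end IsReturnMap

/-- The set of limits of Birkhoff averages of `φ` along the `g`-orbits of points of `W`; for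
`W = univ` it is the pointwise rotation set of `g`. It extends `rotP` and `rotPOn` to observables
with values in any real topological vector space. -/
def birkhoffLimits {Z E : Type*} [AddCommGroup E] [Module ℝ E] [TopologicalSpace E] (g : Z → Z)
    (φ : Z → E) (W : Set Z) : Set E :=
  {v | ∃ z ∈ W, Tendsto (birkhoffAverage ℝ g φ · z) atTop (𝓝 v)}

theorem rotPOn_eq_birkhoffLimits {Z : Type*} {k : ℕ} (g : Z → Z) (φ : Z → Fin k → ℝ)
    (W : Set Z) : rotPOn g φ W = birkhoffLimits g φ W :=
  rfl

theorem rotP_eq_birkhoffLimits_univ {Z : Type*} {k : ℕ} (g : Z → Z) (φ : Z → Fin k → ℝ) :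
    rotP g φ = birkhoffLimits g φ univ := by
  simp only [birkhoffLimits, mem_univ, true_and]
  rfl

section BirkhoffLimits

variable {Z E F : Type*} [NormedAddCommGroup E] [NormedSpace ℝ E] {g R : Z → Z} {φ : Z → E}
  {W : Set Z} {N : Z → ℕ}

theorem birkhoffLimits_univ_eq (hφ : IsBounded (range φ)) (hW : ∀ z, ∃ r, g^[r] z ∈ W) :
    birkhoffLimits g φ univ = birkhoffLimits g φ W := by
  refine Subset.antisymm ?_ fun u ⟨w, _, hu⟩ ↦ ⟨w, mem_univ w, hu⟩
  rintro u ⟨z, -, hu⟩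
  obtain ⟨r, hr⟩ := hW z
  exact ⟨g^[r] z, hr, tendsto_birkhoffAverage_iterate hφ hu r⟩

variable [AddCommGroup F] [Module ℝ F] [TopologicalSpace F] [T2Space F] {Δ : Set F} {β : Z → F}
  {L : F →ₗ[ℝ] E} {M : F →ₗ[ℝ] ℝ}

theorem stmt3_general (hφ : IsBounded (range φ)) (hW : ∀ z, ∃ r, g^[r] z ∈ W)
    (hR : IsReturnMap g W N R) (hΔ : IsCompact Δ) (hΔconv : Convex ℝ Δ) (hβ : MapsTo β W Δ)
    (hLcont : Continuous L) (hMcont : Continuous M)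
    (hL : ∀ w ∈ W, birkhoffSum g φ (N w) w = L (β w)) (hM : ∀ w ∈ W, (N w : ℝ) = M (β w))
    (hMpos : ∀ v ∈ Δ, 0 < M v) (hQinj : InjOn (ratioMap L M) Δ) :
    birkhoffLimits g φ univ = ratioMap L M '' birkhoffLimits R β W := by
  have hN_pos : ∀ w ∈ W, 1 ≤ N w := fun w hw ↦
    Nat.cast_pos.1 ((hM w hw).symm ▸ hMpos _ (hβ hw) : (0 : ℝ) < N w)
  obtain ⟨K, hNK⟩ : ∃ K : ℕ, ∀ w ∈ W, N w ≤ K := by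
    obtain ⟨B, hB⟩ := hΔ.bddAbove_image hMcont.continuousOn
    exact ⟨⌊B⌋₊, fun w hw ↦ Nat.le_floor (hM w hw ▸ hB (mem_image_of_mem M (hβ hw)))⟩
  have hQcont : ContinuousOn (ratioMap L M) Δ :=
    continuousOn_ratioMap hLcont hMcont fun v hv ↦ (hMpos v hv).ne'
  have haverage_mem {w : Z} (hw : w ∈ W) : ∀ᶠ n in atTop, birkhoffAverage ℝ R β n w ∈ Δ :=
    (eventually_ne_atTop 0).mono fun n hn ↦ birkhoffAverage_mem_of_convex hΔconv hR.mapsTo hβ hw hn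
  have htendsto_iff {w : Z} (hw : w ∈ W) (u : E) :
      Tendsto (birkhoffAverage ℝ g φ · w) atTop (𝓝 u) ↔
        Tendsto (ratioMap L M ∘ (birkhoffAverage ℝ R β · w)) atTop (𝓝 u) := by
    simp only [hR.tendsto_birkhoffAverage_iff hφ hN_pos hNK hw,
      hR.birkhoffAverage_returnTime hL hM hw, Function.comp_def]
  rw [birkhoffLimits_univ_eq hφ hW]
  apply Subset.antisymm
  · rintro u ⟨w, hw, hu⟩
    obtain ⟨v, hv, rfl⟩ := exists_tendsto_of_tendsto_comp_of_injOn hΔ hQcont hQinj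
      (haverage_mem hw) ((htendsto_iff hw u).1 hu)
    exact ⟨v, ⟨w, hw, hv⟩, rfl⟩
  · rintro _ ⟨v, ⟨w, hw, hv⟩, rfl⟩
    have hvΔ : v ∈ Δ := hΔ.isClosed.mem_of_tendsto hv (haverage_mem hw)
    exact ⟨w, hw, (htendsto_iff hw _).2 <|
      (hQcont v hvΔ).tendsto.comp (tendsto_nhdsWithin_iff.2 ⟨hv, haverage_mem hw⟩)⟩

end BirkhoffLimits

/-- Computation of the pointwise rotation set via an induced (return) map:
if the return-time observable and the induced cocycle both factor linearly through an
observable `β` taking values in a compact convex set `Δ`, and the projective map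
`Q(v) = L(v)/M(v)` is injective on `Δ`, then `rot_p(Z,g,φ) = Q(rot_p(W,R,β))`. -/
theorem stmt3 {Z : Type*} [MetricSpace Z] [CompactSpace Z] {k l : ℕ}
    (g : Z → Z) (hg : Continuous g) (φ : Z → Fin k → ℝ) (hφbdd : ∃ C, ∀ z, ‖φ z‖ ≤ C)
    (W : Set Z) (K : ℕ)
    (hK : ∀ z : Z, ∃ r, 1 ≤ r ∧ r ≤ K ∧ g^[r] z ∈ W)
    (N : Z → ℕ)
    (hN : ∀ w ∈ W, 1 ≤ N w ∧ g^[N w] w ∈ W ∧ ∀ r, 1 ≤ r → g^[r] w ∈ W → N w ≤ r)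
    (R : Z → Z) (hR : ∀ w ∈ W, R w = g^[N w] w)
    (Δ : Set (Fin l → ℝ)) (hΔc : IsCompact Δ) (hΔconv : Convex ℝ Δ)
    (β : Z → Fin l → ℝ) (hβ : ∀ w ∈ W, β w ∈ Δ)
    (L : (Fin l → ℝ) →ₗ[ℝ] (Fin k → ℝ)) (M : (Fin l → ℝ) →ₗ[ℝ] ℝ)
    (hL : ∀ w ∈ W, cocycle g φ w (N w) = L (β w))
    (hM : ∀ w ∈ W, (N w : ℝ) = M (β w))
    (hMpos : ∀ v ∈ Δ, 0 < M v)
    (hQinj : Set.InjOn (fun v => (M v)⁻¹ • L v) Δ) :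
    rotP g φ = (fun v => (M v)⁻¹ • L v) '' rotPOn R β W := by
  have hφ : IsBounded (range φ) :=
    isBounded_iff_forall_norm_le.2 (by simpa only [forall_mem_range] using hφbdd)
  have hreturn : IsReturnMap g W N R := ⟨fun w hw ↦ hR w hw ▸ (hN w hw).2.1, hR⟩
  rw [rotP_eq_birkhoffLimits_univ, rotPOn_eq_birkhoffLimits]
  exact stmt3_general hφ (fun z ↦ (hK z).imp fun _ h ↦ h.2.2) hreturn hΔc hΔconv hβ
    L.continuous_of_finiteDimensional M.continuous_of_finiteDimensional hL hM hMpos hQinj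
end
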